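/- arXiv:1010.5673 — 3 statements merged into one kernel-verified Lean document; each statement's English description precedes it below -/
import Mathlib

section
/- For all n ≥ 1 and 0 ≤ k ≤ n-1, the number of Dyck paths of semilength n with exactly k up steps at even height equals the Narayana number N(n,k) = (1/n) * C(n,k) * C(n,k+1). -/
/-- A Dyck path of semilength `n`, encoded as a list of booleans where
`true` is an up step `(1,1)` and `false` is a down step `(1,-1)`;
the path never goes below the x-axis. -/
def IsDyckPath (n : ℕ) (p : List Bool) : Prop :=
  p.length = 2 * n ∧ p.count true = n ∧
  ∀ i, (p.take i).count false ≤ (p.take i).count true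

/-- The height of the `i`-th step: the y-coordinate reached after step `i`.
For an up step this is the height `h` such that the step rises from `y = h-1` to `y = h`. -/
def stepHeight (p : List Bool) (i : ℕ) : ℕ :=
  (p.take (i + 1)).count true - (p.take (i + 1)).count false

/-- The number of up steps of `p` at height `h` with `h ≡ c (mod m)`. -/
def upStepsMod (m c : ℕ) (p : List Bool) : ℕ :=
  ((Finset.range p.length).filter
    (fun i => p.getD i false = true ∧ stepHeight p i % m = c)).card

/-!
After its first step a Dyck path of semilength `m + 1` is at height 1; read the next `2 * m` steps
in pairs, each starting at an odd height. A pair contains an up step at even height exactly when its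
first step goes up, so `k` counts the first steps that go up. Without the positivity constraint the
first and the second steps of the pairs are chosen independently, and the reflection principle
turns the constraint into the correction term of the determinant
`C(m, k) * C(m, k + j) - C(m, k - 1) * C(m, k + j + 1)` for a start at height `2 * j + 1`. It
obeys the same recursion as the paths and, like them, vanishes at `j = -1`. At `j = 0` it is the
Narayana number.
-/

section ChooseInt

/-- The binomial coefficient with an integer lower index, zero when that index is negative, so that
Pascal's rule has no boundary case. -/
def chooseInt (n : ℕ) (k : ℤ) : ℤ :=
  if 0 ≤ k then n.choose k.toNat else 0

lemma chooseInt_natCast (n k : ℕ) : chooseInt n k = n.choose k := by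
  simp [chooseInt]

lemma chooseInt_of_neg (n : ℕ) {k : ℤ} (hk : k < 0) : chooseInt n k = 0 :=
  if_neg hk.not_ge

lemma chooseInt_zero_left (k : ℤ) : chooseInt 0 k = if k = 0 then 1 else 0 := by
  rcases lt_or_ge k 0 with hk | hk
  · rw [chooseInt_of_neg 0 hk, if_neg hk.ne]
  · lift k to ℕ using hk
    cases k with
    | zero => rw [chooseInt_natCast, Nat.choose_self, if_pos Nat.cast_zero, Nat.cast_one]
    | succ k => rw [chooseInt_natCast, Nat.choose_zero_succ, if_neg (by lia), Nat.cast_zero]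

lemma chooseInt_succ_left (n : ℕ) (k : ℤ) :
    chooseInt (n + 1) k = chooseInt n (k - 1) + chooseInt n k := by
  rcases lt_or_ge k 0 with hk | hk
  · simp only [chooseInt_of_neg _ hk, chooseInt_of_neg n (show k - 1 < 0 by lia), add_zero]
  · lift k to ℕ using hk
    cases k with
    | zero => simp [chooseInt]
    | succ k =>
      rw [Nat.cast_succ, add_sub_cancel_right, ← Nat.cast_succ]
      simp only [chooseInt_natCast, Nat.succ_eq_add_one]
      exact_mod_cast Nat.choose_succ_succ n k

lemma mul_chooseInt (n : ℕ) (k : ℤ) :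
    k * chooseInt n k = (n - k + 1) * chooseInt n (k - 1) := by
  rcases lt_trichotomy k 0 with hk | rfl | hk
  · rw [chooseInt_of_neg n hk, chooseInt_of_neg n (show k - 1 < 0 by lia), mul_zero, mul_zero]
  · rw [chooseInt_of_neg n (show (0 : ℤ) - 1 < 0 by lia), zero_mul, mul_zero]
  · obtain ⟨k, rfl⟩ : ∃ i : ℕ, k = i + 1 := ⟨(k - 1).toNat, by lia⟩
    rw [add_sub_cancel_right, ← Nat.cast_succ, chooseInt_natCast, chooseInt_natCast]
    have pascal : ((n + 1).choose (k + 1) : ℤ) = n.choose k + n.choose (k + 1) :=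
      mod_cast Nat.choose_succ_succ n k
    have absorb : ((n : ℤ) + 1) * n.choose k = (n + 1).choose (k + 1) * (k + 1) :=
      mod_cast Nat.add_one_mul_choose_eq n k
    push_cast
    linear_combination (-1) * absorb - (k + 1) * pascal

/-- The number of words of `m` pairs of steps that lead from height `2 * j + 1` to height `1`, with
`k` pairs starting with an up step, minus the number that the reflection principle discards for
going below the x-axis. -/
def chooseDet (m : ℕ) (j k : ℤ) : ℤ :=
  chooseInt m k * chooseInt m (k + j) - chooseInt m (k - 1) * chooseInt m (k + j + 1)

lemma chooseDet_zero_left {j : ℤ} (hj : -1 ≤ j) (k : ℤ) :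
    chooseDet 0 j k = if j = 0 ∧ k = 0 then 1 else 0 := by
  simp only [chooseDet, chooseInt_zero_left]
  grind

lemma chooseDet_neg_one (m : ℕ) (k : ℤ) : chooseDet m (-1) k = 0 := by
  rw [chooseDet, ← sub_eq_add_neg, sub_add_cancel, mul_comm, sub_self]

lemma chooseDet_succ_left (m : ℕ) (j k : ℤ) :
    chooseDet (m + 1) j k =
      chooseDet m (j + 1) (k - 1) + chooseDet m j (k - 1) +
        (chooseDet m j k + chooseDet m (j - 1) k) := by
  simp only [chooseDet, chooseInt_succ_left]
  ring_nf

lemma succ_mul_chooseDet_zero (m : ℕ) (k : ℤ) :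
    (m + 1) * chooseDet m 0 k = chooseInt (m + 1) k * chooseInt (m + 1) (k + 1) := by
  have absorb := mul_chooseInt m k
  have absorb_succ := mul_chooseInt m (k + 1)
  rw [chooseDet, add_zero, chooseInt_succ_left, chooseInt_succ_left]
  rw [add_sub_cancel_right] at absorb_succ ⊢
  linear_combination (chooseInt m k + chooseInt m (k + 1)) * absorb -
    (chooseInt m k + chooseInt m (k - 1)) * absorb_succ

end ChooseInt

section Paths

/-- The height reached from height `h` by the steps `p`. -/
def endHeight (h : ℤ) (p : List Bool) : ℤ :=
  h + p.count true - p.count false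

/-- The path with steps `p` starting at height `h` ends on the x-axis and never goes below it. -/
def IsPathFrom (h : ℤ) (p : List Bool) : Prop :=
  endHeight h p = 0 ∧ ∀ i, 0 ≤ endHeight h (p.take i)

/-- The number of up steps at even height of the path with steps `p` starting at height `h`. -/
def evenUpSteps (h : ℤ) (p : List Bool) : ℕ :=
  ((Finset.range p.length).filter
    (fun i => p.getD i false = true ∧ Even (endHeight h (p.take (i + 1))))).card

lemma endHeight_nil (h : ℤ) : endHeight h [] = h := by
  simp [endHeight]

lemma endHeight_cons (h : ℤ) (b : Bool) (p : List Bool) :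
    endHeight h (b :: p) = endHeight (if b then h + 1 else h - 1) p := by
  cases b <;> simp [endHeight] <;> ring

lemma isPathFrom_nil (h : ℤ) : IsPathFrom h [] ↔ h = 0 := by
  simp only [IsPathFrom, List.take_nil, endHeight_nil, forall_const, and_iff_left_iff_imp]
  exact fun hh => hh.ge

lemma isPathFrom_cons (h : ℤ) (b : Bool) (p : List Bool) :
    IsPathFrom h (b :: p) ↔ 0 ≤ h ∧ IsPathFrom (if b then h + 1 else h - 1) p := by
  simp only [IsPathFrom, endHeight_cons, ← Nat.and_forall_add_one (p := fun i =>
    0 ≤ endHeight h ((b :: p).take i)), List.take_zero, List.take_succ_cons, endHeight_nil]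
  tauto

lemma evenUpSteps_nil (h : ℤ) : evenUpSteps h [] = 0 := rfl

lemma evenUpSteps_cons (h : ℤ) (b : Bool) (p : List Bool) :
    evenUpSteps h (b :: p) =
      evenUpSteps (if b then h + 1 else h - 1) p + if b ∧ Odd h then 1 else 0 := by
  simp only [evenUpSteps, Finset.card_filter, List.length_cons, Finset.sum_range_succ',
    List.getD_cons_succ, List.getD_cons_zero, List.take_succ_cons, List.take_zero,
    endHeight_cons, endHeight_nil]
  cases b <;> simp

/-- The paths of `m` steps from height `h` to the x-axis that never go below it and have `k` up
steps at even height. The empty sets at negative `h` and `k` spare the recursion its boundary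
cases. -/
def pathsFrom : ℕ → ℤ → ℤ → Finset (List Bool)
  | 0, h, k => if h = 0 ∧ k = 0 then {[]} else ∅
  | m + 1, h, k =>
    if 0 ≤ h then
      (pathsFrom m (h + 1) (if Odd h then k - 1 else k)).image (List.cons true) ∪
        (pathsFrom m (h - 1) k).image (List.cons false)
    else ∅

lemma mem_pathsFrom {m : ℕ} {h k : ℤ} {p : List Bool} :
    p ∈ pathsFrom m h k ↔ p.length = m ∧ IsPathFrom h p ∧ evenUpSteps h p = k := by
  induction m generalizing h k p with
  | zero =>
    rw [pathsFrom, List.length_eq_zero_iff]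
    constructor
    · intro hp
      split_ifs at hp with hhk
      · simp_all [isPathFrom_nil, evenUpSteps_nil]
      · simp at hp
    · rintro ⟨rfl, hp, hk⟩
      simp_all [isPathFrom_nil, evenUpSteps_nil]
  | succ m ih =>
    rcases p with _ | ⟨_ | _, p⟩ <;> rw [pathsFrom]
    · split_ifs <;> simp
    · simp only [isPathFrom_cons, evenUpSteps_cons, List.length_cons]
      split_ifs <;> simp_all
    · simp only [isPathFrom_cons, evenUpSteps_cons, List.length_cons]
      split_ifs <;> simp_all [eq_sub_iff_add_eq]

lemma card_pathsFrom_zero (h k : ℤ) :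
    (pathsFrom 0 h k).card = if h = 0 ∧ k = 0 then 1 else 0 := by
  rw [pathsFrom, apply_ite Finset.card, Finset.card_singleton, Finset.card_empty]

lemma card_pathsFrom_of_neg (m : ℕ) {h : ℤ} (hh : h < 0) (k : ℤ) :
    (pathsFrom m h k).card = 0 := by
  cases m <;> simp [pathsFrom, hh.ne, hh.not_ge]

lemma card_pathsFrom_succ (m : ℕ) {h : ℤ} (hh : 0 ≤ h) (k : ℤ) :
    (pathsFrom (m + 1) h k).card =
      (pathsFrom m (h + 1) (if Odd h then k - 1 else k)).card + (pathsFrom m (h - 1) k).card := by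
  rw [pathsFrom, if_pos hh, Finset.card_union_of_disjoint,
    Finset.card_image_of_injective _ List.cons_injective,
    Finset.card_image_of_injective _ List.cons_injective]
  simp [Finset.disjoint_left]

lemma card_pathsFrom_add_two_of_odd (m : ℕ) {h : ℤ} (hh : 0 ≤ h) (hodd : Odd h) (k : ℤ) :
    (pathsFrom (m + 2) h k).card =
      (pathsFrom m (h + 2) (k - 1)).card + (pathsFrom m h (k - 1)).card +
        ((pathsFrom m h k).card + (pathsFrom m (h - 2) k).card) := by
  have hpos : 0 < h := hh.lt_of_ne' fun h0 => by simp [h0] at hodd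
  have hup : ¬ Odd (h + 1) := by simpa using hodd.add_one
  have hdown : ¬ Odd (h - 1) := by simpa using hodd.sub_odd odd_one
  rw [card_pathsFrom_succ _ hh, card_pathsFrom_succ _ (by lia), card_pathsFrom_succ _ (by lia),
    if_pos hodd, if_neg hup, if_neg hdown]
  ring_nf

lemma card_pathsFrom_odd_height (m : ℕ) {j : ℤ} (hj : -1 ≤ j) (k : ℤ) :
    (pathsFrom (2 * m + 1) (2 * j + 1) k).card = chooseDet m j k := by
  induction m generalizing j k with
  | zero =>
    rw [chooseDet_zero_left hj]
    rcases hj.eq_or_lt with rfl | hj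
    · simp [card_pathsFrom_of_neg]
    · rw [card_pathsFrom_succ 0 (by lia), card_pathsFrom_zero, card_pathsFrom_zero,
        if_neg (by lia), zero_add, add_sub_cancel_right]
      simp
  | succ m ih =>
    rcases hj.eq_or_lt with rfl | hj
    · rw [chooseDet_neg_one, card_pathsFrom_of_neg _ (by norm_num), Nat.cast_zero]
    · rw [show 2 * (m + 1) + 1 = 2 * m + 1 + 2 by ring,
        card_pathsFrom_add_two_of_odd _ (by lia) (odd_two_mul_add_one j),
        show 2 * j + 1 + 2 = 2 * (j + 1) + 1 by ring, show 2 * j + 1 - 2 = 2 * (j - 1) + 1 by ring]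
      push_cast
      rw [ih (by lia), ih (by lia), ih (by lia), ih (by lia), chooseDet_succ_left]

lemma isDyckPath_iff {n : ℕ} {p : List Bool} :
    IsDyckPath n p ↔ p.length = 2 * n ∧ IsPathFrom 0 p := by
  have hlen : p.count true + p.count false = p.length := List.count_true_add_count_false p
  have hnonneg (i : ℕ) : (p.take i).count false ≤ (p.take i).count true ↔
      0 ≤ endHeight 0 (p.take i) := by
    rw [endHeight]
    lia
  simp only [IsDyckPath, IsPathFrom, hnonneg]
  rw [endHeight]
  lia

lemma IsPathFrom.upStepsMod_two_zero {p : List Bool} (hp : IsPathFrom 0 p) :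
    upStepsMod 2 0 p = evenUpSteps 0 p := by
  have heven (i : ℕ) : stepHeight p i % 2 = 0 ↔ Even (endHeight 0 (p.take (i + 1))) := by
    have hnonneg := hp.2 (i + 1)
    rw [Int.even_iff]
    rw [endHeight] at hnonneg ⊢
    rw [stepHeight]
    lia
  simp only [upStepsMod, evenUpSteps, heven]

lemma isDyckPath_and_upStepsMod_iff_mem_pathsFrom {n k : ℕ} {p : List Bool} :
    IsDyckPath n p ∧ upStepsMod 2 0 p = k ↔ p ∈ pathsFrom (2 * n) 0 k := by
  rw [mem_pathsFrom, isDyckPath_iff, Nat.cast_inj, and_assoc]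
  exact and_congr_right fun _ => and_congr_right fun hp => by rw [hp.upStepsMod_two_zero]

lemma card_pathsFrom_zero_height (m : ℕ) (k : ℤ) :
    (pathsFrom (2 * (m + 1)) 0 k).card = chooseDet m 0 k := by
  rw [show 2 * (m + 1) = 2 * m + 1 + 1 by ring, card_pathsFrom_succ _ le_rfl,
    card_pathsFrom_of_neg _ (show (0 : ℤ) - 1 < 0 by norm_num), if_neg (by decide), add_zero]
  exact card_pathsFrom_odd_height m (j := 0) (by norm_num) k

end Paths

theorem narayana_upSteps_even_height_general (n k : ℕ) :
    n * Nat.card {p : List Bool // IsDyckPath n p ∧ upStepsMod 2 0 p = k} =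
      n.choose k * n.choose (k + 1) := by
  rcases n with _ | m
  · simp
  · simp only [isDyckPath_and_upStepsMod_iff_mem_pathsFrom, Nat.card_eq_fintype_card,
      Fintype.card_coe]
    zify
    rw [card_pathsFrom_zero_height, succ_mul_chooseDet_zero, chooseInt_natCast,
      ← Nat.cast_succ, chooseInt_natCast]

/-- The number of Dyck paths of semilength `n` with exactly `k` up steps at even
height is the Narayana number `N(n,k) = (1/n) * C(n,k) * C(n,k+1)`. -/
theorem narayana_upSteps_even_height (n k : ℕ) (hn : 1 ≤ n) (hk : k ≤ n - 1) :
    Nat.card {p : List Bool // IsDyckPath n p ∧ upStepsMod 2 0 p = k} =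
      n.choose k * n.choose (k + 1) / n :=
  Nat.eq_div_of_mul_eq_right (by lia) (narayana_upSteps_even_height_general n k)
end

section
/- For all n ≥ 1 and 0 ≤ k ≤ n-2, the number of Dyck paths of semilength n with exactly k exterior pairs equals the number of Dyck paths of semilength n with exactly k up steps at height h with h ≡ 0 (mod 3). -/
/-- The up step at position `i` is matched with the down step at position `j`:
the steps strictly between them form a balanced nonnegative (Dyck) word. -/
def Matched (p : List Bool) (i j : ℕ) : Prop :=
  i < j ∧ j < p.length ∧ p.getD i false = true ∧ p.getD j true = false ∧
  (((p.drop (i + 1)).take (j - i - 1)).count true =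
      ((p.drop (i + 1)).take (j - i - 1)).count false) ∧
  ∀ k < j - i - 1,
    ((((p.drop (i + 1)).take (j - i - 1)).take k).count false ≤
      (((p.drop (i + 1)).take (j - i - 1)).take k).count true)

/-- The section of `p` from position `a` to position `b` (inclusive) is a pyramid
`U^h D^h`. -/
def IsPyramidSec (p : List Bool) (a b : ℕ) : Prop :=
  a ≤ b ∧ b < p.length ∧ b - a + 1 = 2 * ((b - a + 1) / 2) ∧
  (p.drop a).take (b - a + 1) =
    List.replicate ((b - a + 1) / 2) true ++ List.replicate ((b - a + 1) / 2) false

/-- A matched pair `(i, j)` is exterior if it does not belong to any pyramid,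
equivalently the section of the path from `i` to `j` is not of the form `U^t D^t`. -/
def ExteriorPair (p : List Bool) (i j : ℕ) : Prop :=
  Matched p i j ∧ ¬ IsPyramidSec p i j

open scoped Classical in
/-- The number of exterior pairs of `p`. -/
noncomputable def exteriorPairs (p : List Bool) : ℕ :=
  ((Finset.range p.length ×ˢ Finset.range p.length).filter
    (fun q : ℕ × ℕ => ExteriorPair p q.1 q.2)).card

section GeneratingFunctions

open BinaryTree PowerSeries
open Finset.HasAntidiagonal (antidiagonal)

variable {R : Type*}

section CommSemiring

variable [CommSemiring R]

/-- The generating function of binary trees by number of nodes, each tree `T` being counted with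
weight `w T`; it is linear in the weight. -/
noncomputable def treeSeries : (BinaryTree Unit → R) →ₗ[R] R⟦X⟧ where
  toFun w := PowerSeries.mk fun n => ∑ T ∈ treesOfNumNodesEq n, w T
  map_add' f g := by ext; simp [Finset.sum_add_distrib]
  map_smul' a f := by ext; simp [Finset.mul_sum]

theorem coeff_treeSeries (w : BinaryTree Unit → R) (n : ℕ) :
    coeff n (treeSeries w) = ∑ T ∈ treesOfNumNodesEq n, w T :=
  coeff_mk n fun n => ∑ T ∈ treesOfNumNodesEq n, w T

theorem sum_treesOfNumNodesEq_succ {M : Type*} [AddCommMonoid M] (w : BinaryTree Unit → M)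
    (n : ℕ) :
    ∑ T ∈ treesOfNumNodesEq (n + 1), w T =
      ∑ ij ∈ antidiagonal n,
        ∑ lr ∈ treesOfNumNodesEq ij.1 ×ˢ treesOfNumNodesEq ij.2, w (lr.1 △ lr.2) := by
  have disjoint_pairwiseNode : (antidiagonal n : Set (ℕ × ℕ)).PairwiseDisjoint fun ij =>
      pairwiseNode (treesOfNumNodesEq ij.1) (treesOfNumNodesEq ij.2) := by
    simp_rw [Set.PairwiseDisjoint, Set.Pairwise, Finset.disjoint_left]
    aesop
  rw [treesOfNumNodesEq_succ, Finset.sum_biUnion disjoint_pairwiseNode]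
  exact Finset.sum_congr rfl fun ij _ => Finset.sum_map _ _ _

theorem treeSeries_eq_of_node {w f g : BinaryTree Unit → R}
    (hw : ∀ l r, w (l △ r) = f l * g r) :
    treeSeries w = C (w nil) + X * (treeSeries f * treeSeries g) := by
  ext n
  cases n with
  | zero => simp [coeff_treeSeries]
  | succ n =>
    rw [map_add, coeff_C, if_neg n.succ_ne_zero, zero_add, coeff_succ_X_mul, coeff_mul]
    simp only [coeff_treeSeries, sum_treesOfNumNodesEq_succ, hw, Finset.sum_mul_sum,
      Finset.sum_product]

theorem treeSeries_ite_eq_nil :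
    treeSeries (fun T => if T = nil then (1 : R) else 0) = 1 := by
  ext n
  simp [coeff_treeSeries, coeff_one, eq_comm]

theorem card_filter_eq_of_treeSeries_pow_eq [CharZero R] {f g : BinaryTree Unit → ℕ}
    (h : treeSeries (fun T => (Polynomial.X : Polynomial R) ^ f T) =
      treeSeries fun T => Polynomial.X ^ g T) (n k : ℕ) :
    ((treesOfNumNodesEq n).filter fun T => f T = k).card =
      ((treesOfNumNodesEq n).filter fun T => g T = k).card := by
  have hcoeff := congrArg (fun s => (coeff n s).coeff k) h
  simpa [coeff_treeSeries, Polynomial.finsetSum_coeff, Polynomial.coeff_X_pow,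
    eq_comm (a := k)] using hcoeff

/-- The tree encodes a pyramid `U^h D^h`: every node has an empty right subtree. -/
def IsPyramidTree : BinaryTree Unit → Prop
  | nil => True
  | node _ l r => IsPyramidTree l ∧ r = nil

open scoped Classical in
/-- The number of exterior pairs of the Dyck path encoded by a tree: a node `l △ r` stands for a
matched pair around the path of `l`, which is exterior unless that path is a pyramid. -/
noncomputable def exteriorNodes : BinaryTree Unit → ℕ
  | nil => 0
  | node _ l r => (if IsPyramidTree l then 0 else 1) + exteriorNodes l + exteriorNodes r

/-- The number of up steps at height congruent to `c` modulo `m` of the Dyck path encoded by a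
tree, when that path is drawn from height `h`. -/
def upNodes (m c : ℕ) : ℕ → BinaryTree Unit → ℕ
  | _, nil => 0
  | h, node _ l r => (if (h + 1) % m = c then 1 else 0) + upNodes m c (h + 1) l + upNodes m c h r

theorem IsPyramidTree.exteriorNodes_eq_zero {T : BinaryTree Unit} (hT : IsPyramidTree T) :
    exteriorNodes T = 0 := by
  induction T with
  | nil => rfl
  | node _ l r ihl _ =>
    obtain ⟨hl, rfl⟩ := hT
    simp [exteriorNodes, hl, ihl hl]

theorem upNodes_add_modulus (m c h : ℕ) (T : BinaryTree Unit) :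
    upNodes m c (h + m) T = upNodes m c h T := by
  induction T generalizing h with
  | nil => rfl
  | node _ l r ihl ihr =>
    simp only [upNodes, add_right_comm h m 1, Nat.add_mod_right, ihl, ihr]

theorem treeSeries_upNodes (m c h : ℕ) (t : R) :
    treeSeries (fun T => t ^ upNodes m c h T) =
      1 + X * (C (if (h + 1) % m = c then t else 1) *
        treeSeries (fun T => t ^ upNodes m c (h + 1) T) *
          treeSeries fun T => t ^ upNodes m c h T) := by
  set weight : ℕ → BinaryTree Unit → R := fun h T => t ^ upNodes m c h T with hweight
  have hnode (l r : BinaryTree Unit) : weight h (l △ r) =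
      ((if (h + 1) % m = c then t else 1) • weight (h + 1)) l * weight h r := by
    split_ifs with hc <;> simp [hweight, upNodes, hc, pow_add]
  have hnil : weight h nil = 1 := by simp [hweight, upNodes]
  have hseries := treeSeries_eq_of_node hnode
  rwa [map_smul, smul_eq_C_mul, hnil, map_one] at hseries

end CommSemiring

section CommRing

variable [CommRing R]

open scoped Classical in
theorem one_sub_X_mul_treeSeries_isPyramidTree :
    (1 - X) * treeSeries (fun T => if IsPyramidTree T then (1 : R) else 0) = 1 := by
  set P : R⟦X⟧ := treeSeries fun T => if IsPyramidTree T then 1 else 0 with hP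
  have hP' : P = 1 + X * P := by
    have hseries := treeSeries_eq_of_node (w := fun T => if IsPyramidTree T then (1 : R) else 0)
      (f := fun T => if IsPyramidTree T then 1 else 0) (g := fun T => if T = nil then 1 else 0)
      fun l r => by by_cases IsPyramidTree l <;> by_cases r = nil <;> simp_all [IsPyramidTree]
    rw [treeSeries_ite_eq_nil, mul_one, ← hP] at hseries
    simpa [IsPyramidTree] using hseries
  linear_combination hP'

open scoped Classical in
theorem treeSeries_exteriorNodes (t : R) :
    treeSeries (fun T => t ^ exteriorNodes T) =
      1 + X * ((C t * treeSeries (fun T => t ^ exteriorNodes T) +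
          C (1 - t) * treeSeries (fun T => if IsPyramidTree T then 1 else 0)) *
        treeSeries fun T => t ^ exteriorNodes T) := by
  set pyramid : BinaryTree Unit → R := fun T => if IsPyramidTree T then 1 else 0 with hpyramid
  set weight : BinaryTree Unit → R := fun T => t ^ exteriorNodes T with hweight
  have hnode (l r : BinaryTree Unit) :
      weight (l △ r) = (t • weight + (1 - t) • pyramid) l * weight r := by
    simp only [hweight, hpyramid, Pi.add_apply, Pi.smul_apply, smul_eq_mul]
    by_cases hl : IsPyramidTree l
    · simp [exteriorNodes, hl, hl.exteriorNodes_eq_zero]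
    · simp [exteriorNodes, hl, pow_add]
  have hnil : weight nil = 1 := by simp [hweight, exteriorNodes]
  have hseries := treeSeries_eq_of_node hnode
  rwa [map_add, map_smul, map_smul, smul_eq_C_mul, smul_eq_C_mul, hnil, map_one] at hseries

theorem quadratic_treeSeries_exteriorNodes (t : R) :
    C t * X * (1 - X) * treeSeries (fun T => t ^ exteriorNodes T) ^ 2 -
      (1 - 2 * X + C t * X) * treeSeries (fun T => t ^ exteriorNodes T) + (1 - X) = 0 := by
  classical
  have hP := one_sub_X_mul_treeSeries_isPyramidTree (R := R)
  have hE := treeSeries_exteriorNodes t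
  rw [map_sub, map_one] at hE
  linear_combination (X - 1) * hE +
    X * (C t - 1) * treeSeries (fun T => t ^ exteriorNodes T) * hP

theorem quadratic_treeSeries_upNodes_three (t : R) :
    C t * X * (1 - X) * treeSeries (fun T => t ^ upNodes 3 0 0 T) ^ 2 -
      (1 - 2 * X + C t * X) * treeSeries (fun T => t ^ upNodes 3 0 0 T) + (1 - X) = 0 := by
  set F : ℕ → R⟦X⟧ := fun h => treeSeries fun T => t ^ upNodes 3 0 h T
  have h₀ : F 0 = 1 + X * (F 1 * F 0) := by simpa using treeSeries_upNodes 3 0 0 t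
  have h₁ : F 1 = 1 + X * (F 2 * F 1) := by simpa using treeSeries_upNodes 3 0 1 t
  have h₂ : F 2 = 1 + X * (C t * F 0 * F 2) := by
    simpa [upNodes_add_modulus 3 0 0] using treeSeries_upNodes 3 0 2 t
  have hF₂ : (1 - C t * X * F 0) * F 2 = 1 := by linear_combination h₂
  have hF₁ : (1 - C t * X * F 0 - X) * F 1 = 1 - C t * X * F 0 := by
    linear_combination (1 - C t * X * F 0) * h₁ + X * F 1 * hF₂
  have hF₀ : (1 - C t * X * F 0 - X - X * (1 - C t * X * F 0)) * F 0 = 1 - C t * X * F 0 - X := by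
    linear_combination (1 - C t * X * F 0 - X) * h₀ + X * F 0 * hF₁
  linear_combination -hF₀

theorem eq_of_quadratic_eq_zero {a b c u v : R} (hu : a * u ^ 2 - b * u + c = 0)
    (hv : a * v ^ 2 - b * v + c = 0) (hunit : IsUnit (a * (u + v) - b)) : u = v :=
  sub_eq_zero.1 <| hunit.mul_right_eq_zero.1 <| by linear_combination hu - hv

theorem treeSeries_exteriorNodes_eq_treeSeries_upNodes_three (t : R) :
    treeSeries (fun T => t ^ exteriorNodes T) = treeSeries fun T => t ^ upNodes 3 0 0 T := by
  refine eq_of_quadratic_eq_zero (quadratic_treeSeries_exteriorNodes t)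
    (quadratic_treeSeries_upNodes_three t) ?_
  simp [isUnit_iff_constantCoeff]

end CommRing

end GeneratingFunctions

section TreePath

open BinaryTree

/-- The identification of Mathlib's Dyck steps with the booleans used by `IsDyckPath`. -/
def stepEquiv : DyckStep ≃ Bool where
  toFun | .U => true | .D => false
  invFun | true => .U | false => .D
  left_inv := by rintro (_ | _) <;> rfl
  right_inv := by rintro (_ | _) <;> rfl

theorem count_true_map_stepEquiv (L : List DyckStep) :
    (L.map stepEquiv).count true = L.count .U :=
  List.count_map_of_injective L _ stepEquiv.injective .U

theorem count_false_map_stepEquiv (L : List DyckStep) :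
    (L.map stepEquiv).count false = L.count .D :=
  List.count_map_of_injective L _ stepEquiv.injective .D

theorem IsDyckPath.count_false_eq {n : ℕ} {p : List Bool} (hp : IsDyckPath n p) :
    p.count false = n := by
  obtain ⟨hlength, htrue, -⟩ := hp
  have hadd := List.count_true_add_count_false p
  lia

theorem isDyckPath_iff_exists_dyckWord {n : ℕ} {p : List Bool} :
    IsDyckPath n p ↔ ∃ w : DyckWord, w.semilength = n ∧ w.toList.map stepEquiv = p := by
  constructor
  · intro hp
    have hmap : (p.map stepEquiv.symm).map stepEquiv = p := by simp
    refine ⟨⟨p.map stepEquiv.symm, ?_, fun i => ?_⟩, ?_, hmap⟩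
    · rw [← count_true_map_stepEquiv, ← count_false_map_stepEquiv, hmap, hp.2.1, hp.count_false_eq]
    · rw [← count_true_map_stepEquiv, ← count_false_map_stepEquiv, List.map_take, hmap]
      exact hp.2.2 i
    · rw [DyckWord.semilength, ← count_true_map_stepEquiv, hmap, hp.2.1]
  · rintro ⟨w, rfl, rfl⟩
    refine ⟨?_, count_true_map_stepEquiv _, fun i => ?_⟩
    · rw [List.length_map, w.two_mul_semilength_eq_length]
    · rw [← List.map_take, count_true_map_stepEquiv, count_false_map_stepEquiv]
      exact w.count_D_le_count_U i

/-- The Dyck path encoded by a binary tree, `l △ r` encoding `U l D r`. -/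
def treePath (T : BinaryTree Unit) : List Bool :=
  (DyckWord.ofTree T).toList.map stepEquiv

@[simp]
theorem treePath_nil : treePath nil = [] := rfl

@[simp]
theorem treePath_node (u : Unit) (l r : BinaryTree Unit) :
    treePath (node u l r) = true :: (treePath l ++ false :: treePath r) := by
  change List.map _ (([DyckStep.U] ++ (DyckWord.ofTree l).toList ++ [DyckStep.D]) ++
    (DyckWord.ofTree r).toList) = _
  simp [treePath, stepEquiv]

theorem treePath_injective : Function.Injective treePath := fun _ _ h =>
  DyckWord.equivTree.symm.injective <| DyckWord.ext <| stepEquiv.injective.list_map h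

theorem isDyckPath_iff_exists_treePath {n : ℕ} {p : List Bool} :
    IsDyckPath n p ↔ ∃ T, T.numNodes = n ∧ treePath T = p := by
  rw [isDyckPath_iff_exists_dyckWord, ← DyckWord.equivTree.symm.exists_congr_right]
  simp [treePath, ← DyckWord.numNodes_toTree, DyckWord.toTree_ofTree]

theorem isDyckPath_treePath (T : BinaryTree Unit) : IsDyckPath T.numNodes (treePath T) :=
  isDyckPath_iff_exists_treePath.2 ⟨T, rfl, rfl⟩

theorem card_isDyckPath_and_eq {stat : List Bool → ℕ} {f : BinaryTree Unit → ℕ}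
    (hstat : ∀ T, stat (treePath T) = f T) (n k : ℕ) :
    Nat.card {p : List Bool // IsDyckPath n p ∧ stat p = k} =
      ((treesOfNumNodesEq n).filter fun T => f T = k).card := by
  rw [← Finset.card_map ⟨treePath, treePath_injective⟩]
  refine Nat.subtype_card _ fun p => ?_
  simp only [Finset.mem_map, Finset.mem_filter, mem_treesOfNumNodesEq,
    Function.Embedding.coeFn_mk, isDyckPath_iff_exists_treePath]
  constructor
  · rintro ⟨T, ⟨hT, hk⟩, rfl⟩
    exact ⟨⟨T, hT, rfl⟩, (hstat T).trans hk⟩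
  · rintro ⟨⟨T, hT, rfl⟩, hk⟩
    exact ⟨T, ⟨hT, (hstat T).symm.trans hk⟩, rfl⟩

end TreePath

section UpSteps

/-- The number of up steps of `p` at height congruent to `c` modulo `m`, when `p` is drawn from
height `h`; the subtraction truncates when `p` goes below the axis. -/
def upStepsModFrom (m c h : ℕ) (p : List Bool) : ℕ :=
  p.length.count fun i => p.getD i false = true ∧
    (h + (p.take (i + 1)).count true - (p.take (i + 1)).count false) % m = c

theorem upStepsMod_eq_upStepsModFrom_zero (m c : ℕ) (p : List Bool) :
    upStepsMod m c p = upStepsModFrom m c 0 p := by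
  simp [upStepsMod, stepHeight, upStepsModFrom, Nat.count_eq_card_filter_range]

theorem upStepsModFrom_true_cons (m c h : ℕ) (p : List Bool) :
    upStepsModFrom m c h (true :: p) =
      (if (h + 1) % m = c then 1 else 0) + upStepsModFrom m c (h + 1) p := by
  simp [upStepsModFrom, Nat.count_succ', add_comm, add_assoc]

theorem upStepsModFrom_succ_false_cons (m c h : ℕ) (p : List Bool) :
    upStepsModFrom m c (h + 1) (false :: p) = upStepsModFrom m c h p := by
  simp [upStepsModFrom, Nat.count_succ', add_right_comm h 1, Nat.add_sub_add_right]

theorem upStepsModFrom_treePath_append (m c h : ℕ) (T : BinaryTree Unit) (s : List Bool) :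
    upStepsModFrom m c h (treePath T ++ s) = upNodes m c h T + upStepsModFrom m c h s := by
  induction T generalizing h s with
  | nil => simp [upNodes]
  | node _ l r ihl ihr =>
    simp [upStepsModFrom_true_cons, upStepsModFrom_succ_false_cons, upNodes, ihl, ihr, add_assoc]

theorem upStepsMod_treePath (m c : ℕ) (T : BinaryTree Unit) :
    upStepsMod m c (treePath T) = upNodes m c 0 T := by
  simpa [upStepsMod_eq_upStepsModFrom_zero, upStepsModFrom] using
    upStepsModFrom_treePath_append m c 0 T []

end UpSteps

section ExteriorPairs

open BinaryTree

theorem Matched.count_false_le_count_true {p : List Bool} {i j k : ℕ} (h : Matched p i j)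
    (hk : k < j - i) :
    ((p.drop (i + 1)).take k).count false ≤ ((p.drop (i + 1)).take k).count true := by
  obtain ⟨-, -, -, -, hbalanced, hnonneg⟩ := h
  rcases (Nat.le_sub_one_of_lt hk).lt_or_eq with hk | rfl
  · simpa [List.take_take, hk.le] using hnonneg k hk
  · exact hbalanced.ge

theorem Matched.le_of_matched {p : List Bool} {i j j' : ℕ} (h : Matched p i j)
    (h' : Matched p i j') : j' ≤ j := by
  -- Otherwise the down step at `j` would take the inside of the longer pair below its start.
  by_contra! hlt
  obtain ⟨hij, hj, -, hfalse, hbalanced, -⟩ := h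
  have htake : (p.drop (i + 1)).take (j - i) =
      (p.drop (i + 1)).take (j - i - 1) ++ [false] := by
    obtain ⟨d, rfl⟩ := Nat.exists_eq_add_of_lt hij
    rw [List.getD_eq_getElem _ _ hj] at hfalse
    rw [show i + d + 1 - i = d + 1 by lia, Nat.add_sub_cancel, List.take_add_one,
      List.getElem?_drop, List.getElem?_eq_getElem (by lia)]
    simp [add_right_comm i 1 d, hfalse]
  have hle := h'.count_false_le_count_true (k := j - i) (by lia)
  rw [htake] at hle
  simp [hbalanced] at hle

theorem Matched.right_unique {p : List Bool} {i j j' : ℕ} (h : Matched p i j)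
    (h' : Matched p i j') : j = j' :=
  le_antisymm (h'.le_of_matched h) (h.le_of_matched h')

theorem matched_add_iff_drop (p : List Bool) (i d : ℕ) :
    Matched p i (i + d) ↔ Matched (p.drop i) 0 d := by
  simp [Matched, List.drop_drop, Nat.lt_sub_iff_add_lt']

theorem isPyramidSec_add_iff_drop (p : List Bool) (i d : ℕ) :
    IsPyramidSec p i (i + d) ↔ IsPyramidSec (p.drop i) 0 d := by
  simp [IsPyramidSec, Nat.lt_sub_iff_add_lt']

theorem exteriorPair_add_iff_drop (p : List Bool) (i d : ℕ) :
    ExteriorPair p i (i + d) ↔ ExteriorPair (p.drop i) 0 d :=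
  and_congr (matched_add_iff_drop p i d) (not_congr (isPyramidSec_add_iff_drop p i d))

/-- The path starts with the up step of an exterior pair. Exterior pairs are counted by the
suffixes with this property. -/
def OpensExterior (p : List Bool) : Prop :=
  ∃ j, ExteriorPair p 0 j

theorem not_opensExterior_nil : ¬ OpensExterior [] := by
  simp [OpensExterior, ExteriorPair, Matched]

theorem not_opensExterior_false_cons (p : List Bool) : ¬ OpensExterior (false :: p) := by
  simp [OpensExterior, ExteriorPair, Matched]

open scoped Classical in
theorem exteriorPairs_eq_card_filter_drop (p : List Bool) :
    exteriorPairs p = ((Finset.range p.length).filter fun i => OpensExterior (p.drop i)).card := by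
  refine Finset.card_bij (fun ij _ => ij.1) ?_ ?_ ?_
  · rintro ⟨i, j⟩ hij
    obtain ⟨hmem, hext⟩ := Finset.mem_filter.1 hij
    obtain ⟨d, rfl : j = i + d⟩ := Nat.exists_eq_add_of_le hext.1.1.le
    exact Finset.mem_filter.2
      ⟨(Finset.mem_product.1 hmem).1, d, (exteriorPair_add_iff_drop p i d).1 hext⟩
  · rintro ⟨i, j⟩ hij ⟨_, j'⟩ hij' rfl
    exact Prod.ext rfl ((Finset.mem_filter.1 hij).2.1.right_unique (Finset.mem_filter.1 hij').2.1)
  · intro i hi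
    obtain ⟨hmem, d, hd⟩ := Finset.mem_filter.1 hi
    have hext := (exteriorPair_add_iff_drop p i d).2 hd
    exact ⟨(i, i + d), Finset.mem_filter.2
      ⟨Finset.mem_product.2 ⟨hmem, Finset.mem_range.2 hext.1.2.1⟩, hext⟩, rfl⟩

theorem countP_tails {α : Type*} {P : List α → Prop} [DecidablePred P] (hnil : ¬ P [])
    (p : List α) :
    p.tails.countP (P ·) = ((Finset.range p.length).filter fun i => P (p.drop i)).card := by
  rw [← Nat.count_eq_card_filter_range]
  induction p with
  | nil => simp [hnil]
  | cons a p ih => simp [List.countP_cons, Nat.count_succ', ih]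

theorem matched_true_cons_treePath (T : BinaryTree Unit) (s : List Bool) :
    Matched (true :: (treePath T ++ false :: s)) 0 ((treePath T).length + 1) := by
  have hT := isDyckPath_treePath T
  refine ⟨by simp, by simp, by simp, by simp, ?_, fun k _ => ?_⟩
  · simp [hT.2.1, hT.count_false_eq]
  · simpa using hT.2.2 k

theorem cons_append_singleton_eq_replicate_append_replicate_iff {α : Type*} {a b : α} {p : List α}
    {m n : ℕ} :
    a :: (p ++ [b]) = List.replicate (m + 1) a ++ List.replicate (n + 1) b ↔
      p = List.replicate m a ++ List.replicate n b := by
  rw [List.replicate_succ (n := m), List.replicate_succ' (n := n), List.cons_append,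
    List.cons_inj_right, ← List.append_assoc, List.append_cancel_right_eq]

theorem treePath_eq_replicate_iff (T : BinaryTree Unit) :
    treePath T = List.replicate T.numNodes true ++ List.replicate T.numNodes false ↔
      IsPyramidTree T := by
  induction T with
  | nil => simp [IsPyramidTree]
  | node u l r ihl _ =>
    have hleft : treePath (node u l nil) = List.replicate (node u l nil).numNodes true ++
        List.replicate (node u l nil).numNodes false ↔ IsPyramidTree l := by
      rw [treePath_node, treePath_nil, numNodes, numNodes, add_zero,
        cons_append_singleton_eq_replicate_append_replicate_iff, ihl]
    constructor
    · intro h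
      have hsorted : (treePath (node u l r)).Pairwise (· ≥ ·) := by
        rw [h]
        simp [List.pairwise_append, List.pairwise_replicate]
      have hr : r = nil := by
        cases r with
        | nil => rfl
        | node => simp [List.pairwise_append, show ¬ true ≤ false by decide] at hsorted
      subst hr
      exact ⟨hleft.1 h, rfl⟩
    · rintro ⟨hl, rfl⟩
      exact hleft.2 hl

theorem isPyramidSec_true_cons_treePath (T : BinaryTree Unit) (s : List Bool) :
    IsPyramidSec (true :: (treePath T ++ false :: s)) 0 ((treePath T).length + 1) ↔
      IsPyramidTree T := by
  have hlength := (isDyckPath_treePath T).1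
  have hhalf : ((treePath T).length + 1 - 0 + 1) / 2 = T.numNodes + 1 := by lia
  have hsection : (true :: (treePath T ++ false :: s)).take ((treePath T).length + 1 - 0 + 1) =
      true :: (treePath T ++ [false]) := by
    simp [List.take_append]
  rw [IsPyramidSec, hhalf, List.drop_zero, hsection,
    cons_append_singleton_eq_replicate_append_replicate_iff, treePath_eq_replicate_iff]
  have hlt : (treePath T).length + 1 < (true :: (treePath T ++ false :: s)).length := by simp
  exact ⟨fun h => h.2.2.2, fun h => ⟨Nat.zero_le _, hlt, by lia, h⟩⟩

theorem opensExterior_true_cons_treePath (T : BinaryTree Unit) (s : List Bool) :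
    OpensExterior (true :: (treePath T ++ false :: s)) ↔ ¬ IsPyramidTree T := by
  have hmatched := matched_true_cons_treePath T s
  rw [← isPyramidSec_true_cons_treePath T s]
  constructor
  · rintro ⟨j, hj, hpyramid⟩
    rwa [hj.right_unique hmatched] at hpyramid
  · exact fun hpyramid => ⟨_, hmatched, hpyramid⟩

open scoped Classical in
theorem countP_tails_treePath_append (T : BinaryTree Unit) (s : List Bool) :
    (treePath T ++ s).tails.countP (OpensExterior ·) =
      exteriorNodes T + s.tails.countP (OpensExterior ·) := by
  induction T generalizing s with
  | nil => simp [exteriorNodes]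
  | node _ l r ihl ihr =>
    simp only [treePath_node, List.cons_append, List.append_assoc, List.tails_cons,
      List.countP_cons, ihl, ihr, exteriorNodes, not_opensExterior_false_cons,
      opensExterior_true_cons_treePath]
    by_cases hl : IsPyramidTree l <;> simp [hl] <;> lia

theorem exteriorPairs_treePath (T : BinaryTree Unit) :
    exteriorPairs (treePath T) = exteriorNodes T := by
  classical
  rw [exteriorPairs_eq_card_filter_drop, ← countP_tails not_opensExterior_nil]
  simpa [not_opensExterior_nil] using countP_tails_treePath_append T []

end ExteriorPairs

theorem exteriorPairs_equidistributed_with_upSteps_mod_three_general (n k : ℕ) :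
    Nat.card {p : List Bool // IsDyckPath n p ∧ exteriorPairs p = k} =
      Nat.card {p : List Bool // IsDyckPath n p ∧ upStepsMod 3 0 p = k} := by
  rw [card_isDyckPath_and_eq exteriorPairs_treePath,
    card_isDyckPath_and_eq (upStepsMod_treePath 3 0)]
  exact card_filter_eq_of_treeSeries_pow_eq
    (treeSeries_exteriorNodes_eq_treeSeries_upNodes_three (Polynomial.X : Polynomial ℤ)) n k

/-- The number of Dyck paths of semilength `n` with exactly `k` exterior pairs equals
the number of Dyck paths of semilength `n` with exactly `k` up steps at height
`h ≡ 0 (mod 3)`. -/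
theorem exteriorPairs_equidistributed_with_upSteps_mod_three (n k : ℕ)
    (hn : 1 ≤ n) (hk : k ≤ n - 2) :
    Nat.card {p : List Bool // IsDyckPath n p ∧ exteriorPairs p = k} =
      Nat.card {p : List Bool // IsDyckPath n p ∧ upStepsMod 3 0 p = k} :=
  exteriorPairs_equidistributed_with_upSteps_mod_three_general n k
end

section
/- Let P(x,y) = Σ_{n,k≥0} p_{n,k} y^k x^n where p_{n,k} is the number of Dyck paths of semilength n with pyramid weight k. Then P satisfies P = 1 + x·(P - (1-y)/(1-xy))·P as formal power series. -/
/-- The pyramid section from `a` to `b` is maximal: it is not contained in a higher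
pyramid. -/
def MaximalPyramidSec (p : List Bool) (a b : ℕ) : Prop :=
  IsPyramidSec p a b ∧
    ¬ (1 ≤ a ∧ b + 1 < p.length ∧ IsPyramidSec p (a - 1) (b + 1))

open scoped Classical in
/-- The pyramid weight of `p`: the sum of the heights of its maximal pyramids. -/
noncomputable def pyramidWeight (p : List Bool) : ℕ :=
  ∑ q ∈ (Finset.range p.length ×ˢ Finset.range p.length).filter
      (fun q : ℕ × ℕ => MaximalPyramidSec p q.1 q.2),
    (q.2 - q.1 + 1) / 2

open MvPowerSeries in
/-- `P(x,y) = Σ p_{n,k} y^k x^n` where `p_{n,k}` is the number of Dyck paths of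
semilength `n` with pyramid weight `k`; `X 0` is `x` and `X 1` is `y`. -/
noncomputable def P : MvPowerSeries (Fin 2) ℚ :=
  fun d => (Nat.card {p : List Bool // IsDyckPath (d 0) p ∧ pyramidWeight p = d 1} : ℚ)

/-!
A nonempty Dyck path factors uniquely as `(U p D) q`, and pyramid weight is additive over such
concatenations, so `P = 1 + N * P` where `N` counts the paths `U p D`. Each up step lying in a
pyramid starts exactly one pyramid, so the pyramid weight is the number of positions at which a
pyramid starts. Hence wrapping `p` into `U p D` raises the weight by one if `p` is itself a pyramid
`U^h D^h` and leaves it unchanged otherwise. As pyramids have generating function `1 / (1 - xy)`,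
this gives `N = x * (P - (1 - y) / (1 - xy))`.
-/

section GenFun

open MvPowerSeries Filter

variable {σ S T U : Type*} (R : Type*) [CommSemiring R]

/-- The generating function `∑ t, x ^ w t` of a type `T` whose elements carry multi-exponents `w t`.
This reading requires `w` to have finite fibres, as `Nat.card` of an infinite type is `0`. -/
noncomputable def genFun (w : T → σ →₀ ℕ) : MvPowerSeries σ R :=
  fun d => (Nat.card {t // w t = d} : R)

lemma coeff_genFun (w : T → σ →₀ ℕ) (d : σ →₀ ℕ) :
    coeff d (genFun R w) = (Nat.card {t // w t = d} : R) := rfl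

lemma genFun_comp_equiv (e : S ≃ T) (w : T → σ →₀ ℕ) :
    genFun R (fun s => w (e s)) = genFun R w := by
  ext d
  exact congrArg Nat.cast (Nat.card_congr (e.subtypeEquiv fun _ => Iff.rfl))

lemma genFun_unique [Unique T] (w : T → σ →₀ ℕ) :
    genFun R w = monomial (w default) (1 : R) := by
  classical
  ext d
  rw [coeff_genFun, coeff_monomial]
  split_ifs with h
  · have : Unique {t // w t = d} := ⟨⟨default, h.symm⟩, fun t => Subtype.ext (Unique.eq_default _)⟩
    rw [Nat.card_unique, Nat.cast_one]
  · have : IsEmpty {t // w t = d} := ⟨fun t => h (by rw [← t.2, Unique.eq_default t.1])⟩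
    rw [Nat.card_of_isEmpty, Nat.cast_zero]

lemma genFun_add_left (d : σ →₀ ℕ) (w : T → σ →₀ ℕ) :
    genFun R (fun t => d + w t) = monomial d (1 : R) * genFun R w := by
  classical
  ext e
  rw [coeff_monomial_mul, coeff_genFun]
  split_ifs with h
  · simp only [coeff_genFun, one_mul, eq_tsub_iff_add_eq_of_le h, add_comm d]
  · have : IsEmpty {t // d + w t = e} := ⟨fun t => h (le_self_add.trans_eq t.2)⟩
    rw [Nat.card_of_isEmpty, Nat.cast_zero]

lemma finite_fiber (w : T → σ →₀ ℕ) [TendstoCofinite w] (d : σ →₀ ℕ) : Finite {t // w t = d} :=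
  (TendstoCofinite.finite_preimage_singleton w d).to_subtype

lemma genFun_eq_add (e : S ⊕ U ≃ T) (w : T → σ →₀ ℕ) [TendstoCofinite w] :
    genFun R w = genFun R (fun s => w (e (.inl s))) + genFun R (fun u => w (e (.inr u))) := by
  ext d
  have : Finite {s // w (e (.inl s)) = d} :=
    finite_fiber (w ∘ e ∘ Function.Embedding.inl) d
  have : Finite {u // w (e (.inr u)) = d} :=
    finite_fiber (w ∘ e ∘ Function.Embedding.inr) d
  rw [← genFun_comp_equiv R e, map_add, coeff_genFun, Nat.card_congr Equiv.subtypeSum,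
    Nat.card_sum, Nat.cast_add]
  rfl

lemma genFun_eq_add_one [Unique U] (e : S ⊕ U ≃ T) (w : T → σ →₀ ℕ) [TendstoCofinite w]
    (h : w (e (.inr default)) = 0) : genFun R w = genFun R (fun s => w (e (.inl s))) + 1 := by
  rw [genFun_eq_add R e, genFun_unique R fun u => w (e (.inr u)), h, monomial_zero_one]

lemma genFun_eq_add_of_injective {f : S → T} (hf : f.Injective) (w : T → σ →₀ ℕ)
    [TendstoCofinite w] :
    genFun R w =
      genFun R (fun s => w (f s)) + genFun R (fun t : {t // t ∉ Set.range f} => w t) := by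
  classical
  exact genFun_eq_add R (((Equiv.ofInjective f hf).sumCongr (Equiv.refl _)).trans
    (Equiv.sumCompl (· ∈ Set.range f))) w

/-- The pairs of total weight `d`, sorted by the weights of their components. -/
def fiberProdEquiv [DecidableEq σ] (v : S → σ →₀ ℕ) (w : T → σ →₀ ℕ) (d : σ →₀ ℕ) :
    {x : S × T // v x.1 + w x.2 = d} ≃
      Σ y : Finset.HasAntidiagonal.antidiagonal d, {s // v s = y.1.1} × {t // w t = y.1.2} where
  toFun x := ⟨⟨(v x.1.1, w x.1.2), Finset.HasAntidiagonal.mem_antidiagonal.2 x.2⟩,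
    ⟨x.1.1, rfl⟩, ⟨x.1.2, rfl⟩⟩
  invFun y := ⟨(y.2.1.1, y.2.2.1), by
    rw [y.2.1.2, y.2.2.2]; exact Finset.HasAntidiagonal.mem_antidiagonal.1 y.1.2⟩
  left_inv _ := rfl
  right_inv := by
    rintro ⟨⟨⟨_, _⟩, _⟩, ⟨_, hs⟩, ⟨_, ht⟩⟩
    cases hs
    cases ht
    rfl

lemma genFun_prod (v : S → σ →₀ ℕ) (w : T → σ →₀ ℕ) [TendstoCofinite v] [TendstoCofinite w] :
    genFun R (fun x : S × T => v x.1 + w x.2) = genFun R v * genFun R w := by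
  classical
  ext d
  have := finite_fiber v
  have := finite_fiber w
  rw [coeff_mul, coeff_genFun, Nat.card_congr (fiberProdEquiv v w d), Nat.card_sigma]
  simp only [Nat.card_prod, Nat.cast_sum, Nat.cast_mul, coeff_genFun]
  exact Finset.sum_coe_sort _ fun y : (σ →₀ ℕ) × (σ →₀ ℕ) =>
    (Nat.card {s // v s = y.1} : R) * Nat.card {t // w t = y.2}

lemma genFun_nsmul {K : Type*} [Field K] {d : σ →₀ ℕ} (hd : d ≠ 0) :
    genFun K (fun n : ℕ => n • d) = (1 - monomial d (1 : K))⁻¹ := by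
  classical
  have : TendstoCofinite (fun n : ℕ => n • d) := tendstoCofinite_of_injective fun m n hmn => by
    obtain ⟨i, hi⟩ := Finsupp.ne_iff.1 hd
    exact Nat.eq_of_mul_eq_mul_right (Nat.pos_of_ne_zero hi) (DFunLike.congr_fun hmn i)
  have hrec : genFun K (fun n : ℕ => n • d) =
      monomial d 1 * genFun K (fun n : ℕ => n • d) + 1 := by
    rw [← genFun_add_left]
    convert genFun_eq_add_one K Equiv.natSumPUnitEquivNat.{0} (fun n : ℕ => n • d) (zero_nsmul d)
      using 4 with n
    exact (succ_nsmul' d n).symm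
  have hunit : constantCoeff (1 - monomial d (1 : K)) ≠ 0 := by
    rw [← coeff_zero_eq_constantCoeff_apply, map_sub, coeff_zero_one, coeff_monomial,
      if_neg hd.symm, sub_zero]
    exact one_ne_zero
  rw [MvPowerSeries.eq_inv_iff_mul_eq_one hunit]
  linear_combination hrec

end GenFun

section BoolPath

/-- The identification of the steps of `DyckWord` with those of `IsDyckPath`: `U` is `true`. -/
def stepEquivBool : DyckStep ≃ Bool where
  toFun
    | .U => true
    | .D => false
  invFun b := if b then .U else .D
  left_inv := by rintro (_ | _) <;> rfl
  right_inv := by rintro (_ | _) <;> rfl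

lemma count_true_map_stepEquivBool (l : List DyckStep) :
    (l.map stepEquivBool).count true = l.count .U :=
  List.count_map_of_injective l _ stepEquivBool.injective .U

lemma count_false_map_stepEquivBool (l : List DyckStep) :
    (l.map stepEquivBool).count false = l.count .D :=
  List.count_map_of_injective l _ stepEquivBool.injective .D

/-- The list of booleans encoding a Dyck word in the sense of `IsDyckPath`. -/
def boolPath (p : DyckWord) : List Bool := p.toList.map stepEquivBool

lemma boolPath_injective : Function.Injective boolPath := fun _ _ h =>
  DyckWord.ext (stepEquivBool.injective.list_map h)

@[simp] lemma boolPath_zero : boolPath 0 = [] := rfl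

@[simp] lemma boolPath_add (p q : DyckWord) : boolPath (p + q) = boolPath p ++ boolPath q :=
  List.map_append

@[simp] lemma boolPath_nest (p : DyckWord) :
    boolPath p.nest = true :: (boolPath p ++ [false]) := by
  simp [boolPath, DyckWord.nest, stepEquivBool]

lemma count_true_boolPath (p : DyckWord) : (boolPath p).count true = p.semilength :=
  count_true_map_stepEquivBool _

lemma count_false_boolPath (p : DyckWord) : (boolPath p).count false = p.semilength :=
  (count_false_map_stepEquivBool _).trans p.semilength_eq_count_D.symm

lemma count_false_le_of_isPrefix_boolPath {p : DyckWord} {s : List Bool}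
    (hs : s <+: boolPath p) : s.count false ≤ s.count true := by
  rw [List.prefix_iff_eq_take.1 hs, boolPath, ← List.map_take, count_false_map_stepEquivBool,
    count_true_map_stepEquivBool]
  exact p.count_D_le_count_U _

lemma count_true_le_of_isSuffix_boolPath {p : DyckWord} {s : List Bool}
    (hs : s <:+ boolPath p) : s.count true ≤ s.count false := by
  obtain ⟨r, hr⟩ := hs
  have hpre := count_false_le_of_isPrefix_boolPath ⟨s, hr⟩
  have htrue := count_true_boolPath p
  have hfalse := count_false_boolPath p
  rw [← hr, List.count_append] at htrue hfalse
  omega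

lemma isDyckPath_iff_s10 {n : ℕ} {l : List Bool} :
    IsDyckPath n l ↔ ∃ p : DyckWord, p.semilength = n ∧ boolPath p = l := by
  constructor
  · rintro ⟨hlen, htrue, hpre⟩
    have hl : (l.map stepEquivBool.symm).map stepEquivBool = l := by simp
    have hfalse := List.count_true_add_count_false (l := l)
    refine ⟨⟨l.map stepEquivBool.symm, ?_, fun i => ?_⟩, ?_, hl⟩
    · rw [← count_true_map_stepEquivBool, ← count_false_map_stepEquivBool, hl]
      omega
    · rw [← count_true_map_stepEquivBool, ← count_false_map_stepEquivBool, List.map_take, hl]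
      exact hpre i
    · rw [← count_true_boolPath, boolPath, hl, htrue]
  · rintro ⟨p, rfl, rfl⟩
    exact ⟨by simp [boolPath], count_true_boolPath p,
      fun i => count_false_le_of_isPrefix_boolPath (List.take_prefix i _)⟩

lemma eq_or_count_false_lt_of_isPrefix_boolPath_nest {p : DyckWord} {s : List Bool} (hne : s ≠ [])
    (hs : s <+: boolPath p.nest) : s = boolPath p.nest ∨ s.count false < s.count true := by
  rw [boolPath_nest] at hs ⊢
  obtain rfl | ⟨t, rfl, ht⟩ := List.prefix_cons_iff.1 hs
  · exact absurd rfl hne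
  · obtain rfl | ht := List.prefix_concat_iff.1 ht
    · exact .inl rfl
    · right
      simpa [Nat.lt_succ_iff] using count_false_le_of_isPrefix_boolPath ht

lemma eq_of_boolPath_nest_isPrefix {p q : DyckWord} {l : List Bool} (hp : boolPath p.nest <+: l)
    (hq : boolPath q.nest <+: l) : p = q := by
  wlog hpq : boolPath p.nest <+: boolPath q.nest generalizing p q
  · exact (this hq hp ((List.prefix_or_prefix_of_prefix hp hq).resolve_left hpq)).symm
  have hnest : p.nest = q.nest := by
    obtain h | h := eq_or_count_false_lt_of_isPrefix_boolPath_nest (by simp) hpq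
    · exact boolPath_injective h
    · rw [count_false_boolPath, count_true_boolPath] at h
      exact absurd h (lt_irrefl _)
  simpa using congrArg DyckWord.insidePart hnest

end BoolPath

section Pyramid

/-- The pyramid `U^h D^h`. -/
def pyramid (h : ℕ) : List Bool := List.replicate h true ++ List.replicate h false

/-- The pyramid `U^h D^h` as a Dyck word. -/
def pyramidWord (h : ℕ) : DyckWord := DyckWord.nest^[h] 0

lemma pyramidWord_succ (h : ℕ) : pyramidWord (h + 1) = (pyramidWord h).nest :=
  Function.iterate_succ_apply' _ _ _

lemma boolPath_pyramidWord (h : ℕ) : boolPath (pyramidWord h) = pyramid h := by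
  induction h with
  | zero => rfl
  | succ h ih =>
    rw [pyramidWord_succ, boolPath_nest, ih]
    simp [pyramid, List.replicate_succ, ← List.replicate_succ']

lemma boolPath_nest_pyramidWord (h : ℕ) : boolPath (pyramidWord h).nest = pyramid (h + 1) := by
  rw [← pyramidWord_succ, boolPath_pyramidWord]

lemma semilength_pyramidWord (h : ℕ) : (pyramidWord h).semilength = h := by
  induction h with
  | zero => rfl
  | succ h ih => rw [pyramidWord_succ, DyckWord.semilength_nest, ih]

lemma pyramidWord_injective : Function.Injective pyramidWord :=
  Function.LeftInverse.injective semilength_pyramidWord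

lemma pyramid_succ_isPrefix_unique {h k : ℕ} {l : List Bool} (hh : pyramid (h + 1) <+: l)
    (hk : pyramid (k + 1) <+: l) : h = k := by
  rw [← boolPath_nest_pyramidWord] at hh hk
  exact pyramidWord_injective (eq_of_boolPath_nest_isPrefix hh hk)

lemma pyramid_isPrefix_drop {i h a : ℕ} {l : List Bool} (hl : pyramid (i + h) <+: l.drop a) :
    pyramid h <+: l.drop (a + i) := by
  have hdrop : pyramid h <+: (pyramid (i + h)).drop i := by
    refine ⟨List.replicate i false, ?_⟩
    simp [pyramid, List.drop_append, add_comm i h]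
  rw [← List.drop_drop]
  exact hdrop.trans (hl.drop i)

/-- Some pyramid of positive height is an initial section of `l`. -/
def StartsPyramid (l : List Bool) : Prop := ∃ h, pyramid (h + 1) <+: l

lemma startsPyramid_append {s r : List Bool} (hne : s ≠ []) (hs : s.count true ≤ s.count false) :
    StartsPyramid (s ++ r) ↔ StartsPyramid s := by
  refine ⟨fun ⟨h, hh⟩ => ?_, fun ⟨h, hh⟩ => ⟨h, hh.trans (List.prefix_append s r)⟩⟩
  obtain hle | hle := List.prefix_or_prefix_of_prefix hh (List.prefix_append s r)
  · exact ⟨h, hle⟩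
  · rw [← boolPath_nest_pyramidWord] at hle
    obtain rfl | hlt := eq_or_count_false_lt_of_isPrefix_boolPath_nest hne hle
    · exact ⟨h, by rw [boolPath_nest_pyramidWord]⟩
    · omega

lemma startsPyramid_boolPath_nest {p : DyckWord} :
    StartsPyramid (boolPath p.nest) ↔ p ∈ Set.range pyramidWord := by
  simp only [StartsPyramid, ← boolPath_nest_pyramidWord, Set.mem_range]
  exact ⟨fun ⟨h, hh⟩ => ⟨h, eq_of_boolPath_nest_isPrefix hh List.prefix_rfl⟩,
    fun ⟨h, hh⟩ => ⟨h, by rw [hh]⟩⟩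

end Pyramid

section PyramidWeight

lemma isPyramidSec_iff {p : List Bool} {a b : ℕ} :
    IsPyramidSec p a b ↔ ∃ h, b + 1 = a + 2 * (h + 1) ∧ pyramid (h + 1) <+: p.drop a := by
  constructor
  · rintro ⟨hab, -, heven, hsec⟩
    obtain ⟨h, hh⟩ : ∃ h, (b - a + 1) / 2 = h + 1 := Nat.exists_eq_succ_of_ne_zero (by omega)
    rw [hh] at hsec
    exact ⟨h, by omega, by rw [pyramid, ← hsec]; exact List.take_prefix _ _⟩
  · rintro ⟨h, hb, hpre⟩
    have hlen : 2 * (h + 1) ≤ p.length - a := by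
      simpa [pyramid, two_mul] using hpre.length_le
    have hsec : b - a + 1 = 2 * (h + 1) := by omega
    refine ⟨by omega, by omega, by omega, ?_⟩
    rw [hsec, Nat.mul_div_cancel_left _ two_pos]
    simpa [pyramid, two_mul] using (List.prefix_iff_eq_take.1 hpre).symm

/-- `p` has a pyramid of height `h` starting at position `a` that is not contained in a higher
one. For `h > 0` it suffices to exclude height `h + 1` at `a - 1`, since nested pyramids of positive
height share their apex. -/
def IsMaximalPyramid (p : List Bool) (a h : ℕ) : Prop :=
  pyramid h <+: p.drop a ∧ ∀ c, c + 1 = a → ¬ pyramid (h + 1) <+: p.drop c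

lemma maximalPyramidSec_iff {p : List Bool} {a b : ℕ} :
    MaximalPyramidSec p a b ↔ ∃ h, b + 1 = a + 2 * (h + 1) ∧ IsMaximalPyramid p a (h + 1) := by
  rw [MaximalPyramidSec, isPyramidSec_iff]
  constructor
  · rintro ⟨⟨h, hb, hpre⟩, hmax⟩
    refine ⟨h, hb, hpre, ?_⟩
    rintro c rfl hc
    have hsec : IsPyramidSec p c (b + 1) := isPyramidSec_iff.2 ⟨h + 1, by omega, hc⟩
    exact hmax ⟨by omega, hsec.2.1, hsec⟩
  · rintro ⟨h, hb, hpre, hmax⟩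
    refine ⟨⟨h, hb, hpre⟩, fun ⟨ha, _, hsec⟩ => ?_⟩
    obtain ⟨k, hk, hc⟩ := isPyramidSec_iff.1 hsec
    obtain rfl : k = h + 1 := by omega
    exact hmax (a - 1) (Nat.sub_add_cancel ha) hc

/-- The apex, at position `a + h`, does not move when a pyramid is extended outwards. -/
lemma exists_isMaximalPyramid {p : List Bool} {a h : ℕ} (hpre : pyramid h <+: p.drop a) :
    ∃ b k, b ≤ a ∧ b + k = a + h ∧ IsMaximalPyramid p b k := by
  induction a generalizing h with
  | zero => exact ⟨0, h, le_rfl, rfl, hpre, by omega⟩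
  | succ a ih =>
    by_cases hext : pyramid (h + 1) <+: p.drop a
    · obtain ⟨b, k, hba, hapex, hmax⟩ := ih hext
      exact ⟨b, k, by omega, by omega, hmax⟩
    · refine ⟨a + 1, h, le_rfl, rfl, hpre, fun c hc => ?_⟩
      obtain rfl : c = a := by omega
      exact hext

lemma IsMaximalPyramid.le_of_apex_eq {p : List Bool} {a h b k : ℕ} (ha : IsMaximalPyramid p a h)
    (hb : pyramid k <+: p.drop b) (hapex : a + h = b + k) : a ≤ b := by
  by_contra! hlt
  obtain ⟨i, rfl⟩ := Nat.exists_eq_add_of_lt hlt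
  obtain rfl : k = i + (h + 1) := by omega
  exact ha.2 (b + i) rfl (pyramid_isPrefix_drop hb)

lemma IsMaximalPyramid.eq_of_overlap {p : List Bool} {a h b k c : ℕ}
    (ha : IsMaximalPyramid p a h) (hb : IsMaximalPyramid p b k)
    (hca : c ∈ Finset.Ico a (a + h)) (hcb : c ∈ Finset.Ico b (b + k)) : a = b ∧ h = k := by
  rw [Finset.mem_Ico] at hca hcb
  obtain ⟨i, rfl⟩ := Nat.exists_eq_add_of_le hca.1
  obtain ⟨j, hj⟩ := Nat.exists_eq_add_of_le hcb.1
  obtain ⟨m, rfl⟩ : ∃ m, h = i + (m + 1) := ⟨h - i - 1, by omega⟩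
  obtain ⟨n, rfl⟩ : ∃ n, k = j + (n + 1) := ⟨k - j - 1, by omega⟩
  have hmn : m = n :=
    pyramid_succ_isPrefix_unique (pyramid_isPrefix_drop ha.1) (hj ▸ pyramid_isPrefix_drop hb.1)
  have hab := ha.le_of_apex_eq hb.1 (by omega)
  have hba := hb.le_of_apex_eq ha.1 (by omega)
  omega

lemma exists_mem_Ico_maximalPyramidSec_iff {p : List Bool} {c : ℕ} :
    (∃ a b, MaximalPyramidSec p a b ∧ c ∈ Finset.Ico a (a + (b - a + 1) / 2)) ↔
      StartsPyramid (p.drop c) := by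
  simp only [maximalPyramidSec_iff, Finset.mem_Ico]
  constructor
  · rintro ⟨a, b, ⟨h, hb, hpre, -⟩, hac, hca⟩
    obtain ⟨i, rfl⟩ := Nat.exists_eq_add_of_le hac
    obtain ⟨m, hm⟩ : ∃ m, h + 1 = i + (m + 1) := ⟨h - i, by omega⟩
    exact ⟨m, pyramid_isPrefix_drop (hm ▸ hpre)⟩
  · rintro ⟨h, hpre⟩
    obtain ⟨a, k, hac, hapex, hmax⟩ := exists_isMaximalPyramid hpre
    obtain ⟨m, rfl⟩ : ∃ m, k = m + 1 := ⟨k - 1, by omega⟩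
    exact ⟨a, a + 2 * (m + 1) - 1, ⟨m, by omega, hmax⟩, hac, by omega⟩

lemma MaximalPyramidSec.eq_of_overlap {p : List Bool} {a b a' b' c : ℕ}
    (h : MaximalPyramidSec p a b) (h' : MaximalPyramidSec p a' b')
    (hc : c ∈ Finset.Ico a (a + (b - a + 1) / 2))
    (hc' : c ∈ Finset.Ico a' (a' + (b' - a' + 1) / 2)) : a = a' ∧ b = b' := by
  obtain ⟨k, hb, hk⟩ := maximalPyramidSec_iff.1 h
  obtain ⟨k', hb', hk'⟩ := maximalPyramidSec_iff.1 h'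
  rw [show (b - a + 1) / 2 = k + 1 by omega] at hc
  rw [show (b' - a' + 1) / 2 = k' + 1 by omega] at hc'
  have := hk.eq_of_overlap hk' hc hc'
  omega

open scoped Classical in
lemma pyramidWeight_eq_count (p : List Bool) :
    pyramidWeight p = Nat.count (fun a => StartsPyramid (p.drop a)) p.length := by
  have hcover : {a ∈ Finset.range p.length | StartsPyramid (p.drop a)} =
      {q ∈ Finset.range p.length ×ˢ Finset.range p.length | MaximalPyramidSec p q.1 q.2}.biUnion
        fun q => Finset.Ico q.1 (q.1 + (q.2 - q.1 + 1) / 2) := by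
    ext c
    simp only [Finset.mem_filter, Finset.mem_range, Finset.mem_biUnion, Finset.mem_product,
      Prod.exists, ← exists_mem_Ico_maximalPyramidSec_iff]
    constructor
    · rintro ⟨-, a, b, hmax, hc⟩
      have := hmax.1.1
      have := hmax.1.2.1
      exact ⟨a, b, ⟨⟨by omega, by omega⟩, hmax⟩, hc⟩
    · rintro ⟨a, b, ⟨⟨_, hb⟩, hmax⟩, hc⟩
      have := hmax.1.1
      have := (Finset.mem_Ico.1 hc).2
      exact ⟨by omega, a, b, hmax, hc⟩
  rw [Nat.count_eq_card_filter_range, hcover, Finset.card_biUnion]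
  · simp only [Nat.card_Ico, Nat.add_sub_cancel_left, pyramidWeight]
  · intro q hq q' hq' hne
    rw [Function.onFun, Finset.disjoint_left]
    intro c hc hc'
    obtain ⟨ha, hb⟩ := MaximalPyramidSec.eq_of_overlap (Finset.mem_filter.1 hq).2
      (Finset.mem_filter.1 hq').2 hc hc'
    exact hne (Prod.ext ha hb)

@[simp] lemma pyramidWeight_nil : pyramidWeight [] = 0 := by
  simp [pyramidWeight_eq_count]

open scoped Classical in
lemma pyramidWeight_cons (x : Bool) (p : List Bool) :
    pyramidWeight (x :: p) = pyramidWeight p + if StartsPyramid (x :: p) then 1 else 0 := by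
  simp only [pyramidWeight_eq_count, List.length_cons, Nat.count_succ', List.drop_succ_cons,
    List.drop_zero]

lemma pyramidWeight_append {s r : List Bool}
    (hs : ∀ t, t <:+ s → t.count true ≤ t.count false) :
    pyramidWeight (s ++ r) = pyramidWeight s + pyramidWeight r := by
  classical
  induction s with
  | nil => simp
  | cons x s ih =>
    have hstart : StartsPyramid (x :: (s ++ r)) ↔ StartsPyramid (x :: s) :=
      startsPyramid_append (List.cons_ne_nil x s) (hs _ List.suffix_rfl)
    rw [List.cons_append, pyramidWeight_cons, pyramidWeight_cons,
      ih fun t ht => hs t (ht.trans (List.suffix_cons x s)), add_right_comm]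
    simp only [hstart]

lemma pyramidWeight_singleton_false : pyramidWeight [false] = 0 := by
  classical
  have hstart : ¬ StartsPyramid [false] := by
    rintro ⟨h, hh⟩
    simp [pyramid, List.replicate_succ] at hh
  rw [pyramidWeight_cons, if_neg hstart, pyramidWeight_nil]

lemma pyramidWeight_boolPath_append (p : DyckWord) (r : List Bool) :
    pyramidWeight (boolPath p ++ r) = pyramidWeight (boolPath p) + pyramidWeight r :=
  pyramidWeight_append fun _ => count_true_le_of_isSuffix_boolPath

open scoped Classical in
lemma pyramidWeight_boolPath_nest (p : DyckWord) :
    pyramidWeight (boolPath p.nest) =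
      pyramidWeight (boolPath p) + if p ∈ Set.range pyramidWord then 1 else 0 := by
  simp only [← startsPyramid_boolPath_nest, boolPath_nest]
  rw [pyramidWeight_cons, pyramidWeight_boolPath_append, pyramidWeight_singleton_false, add_zero]

end PyramidWeight

section FirstReturn

open MvPowerSeries Filter Finsupp

/-- The exponent of `x ^ n * y ^ k` for a Dyck word of semilength `n` and pyramid weight `k`. -/
noncomputable def dyckWeight (p : DyckWord) : Fin 2 →₀ ℕ :=
  single 0 p.semilength + single 1 (pyramidWeight (boolPath p))

lemma dyckWeight_eq_iff {p : DyckWord} {d : Fin 2 →₀ ℕ} :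
    dyckWeight p = d ↔ p.semilength = d 0 ∧ pyramidWeight (boolPath p) = d 1 := by
  simp [DFunLike.ext_iff, Fin.forall_fin_two, dyckWeight]

@[simp] lemma dyckWeight_zero : dyckWeight 0 = 0 := by
  simp [dyckWeight]

lemma dyckWeight_add (p q : DyckWord) : dyckWeight (p + q) = dyckWeight p + dyckWeight q := by
  simp only [dyckWeight, DyckWord.semilength_add, boolPath_add, pyramidWeight_boolPath_append,
    single_add]
  exact add_add_add_comm _ _ _ _

lemma dyckWeight_nest_of_mem {p : DyckWord} (hp : p ∈ Set.range pyramidWord) :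
    dyckWeight p.nest = single 0 1 + single 1 1 + dyckWeight p := by
  simp only [dyckWeight, DyckWord.semilength_nest, pyramidWeight_boolPath_nest, if_pos hp,
    single_add]
  abel

lemma dyckWeight_nest_of_notMem {p : DyckWord} (hp : p ∉ Set.range pyramidWord) :
    dyckWeight p.nest = single 0 1 + dyckWeight p := by
  simp only [dyckWeight, DyckWord.semilength_nest, pyramidWeight_boolPath_nest, if_neg hp,
    single_add, single_zero]
  abel

lemma dyckWeight_pyramidWord (h : ℕ) :
    dyckWeight (pyramidWord h) = h • (single 0 1 + single 1 1) := by
  induction h with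
  | zero => rw [zero_nsmul, pyramidWord, Function.iterate_zero_apply, dyckWeight_zero]
  | succ h ih => rw [pyramidWord_succ, dyckWeight_nest_of_mem ⟨h, rfl⟩, ih, succ_nsmul']

instance tendstoCofinite_dyckWeight : TendstoCofinite dyckWeight :=
  (tendstoCofinite_iff_finite_preimage_singleton _).2 fun d =>
    have hfin : {p : DyckWord | p.semilength = d 0}.Finite :=
      inferInstanceAs (Finite {p : DyckWord // p.semilength = d 0})
    hfin.subset fun _ hp => (dyckWeight_eq_iff.1 hp).1

lemma dyckWord_nest_injective : Function.Injective DyckWord.nest :=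
  Function.LeftInverse.injective (g := DyckWord.insidePart) fun _ => DyckWord.insidePart_nest

instance tendstoCofinite_dyckWeight_nest :
    TendstoCofinite fun p : DyckWord => dyckWeight p.nest :=
  have := tendstoCofinite_of_injective dyckWord_nest_injective
  inferInstanceAs (TendstoCofinite (dyckWeight ∘ DyckWord.nest))

/-- The first-return decomposition: a Dyck word is empty or of the form `U p D q`. -/
noncomputable def firstReturnEquiv : (DyckWord × DyckWord) ⊕ Unit ≃ DyckWord where
  toFun := Sum.elim (fun x => x.1.nest + x.2) fun _ => 0
  invFun p := open scoped Classical in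
    if p = 0 then .inr () else .inl (p.insidePart, p.outsidePart)
  left_inv := by rintro (⟨p, q⟩ | _) <;> simp
  right_inv p := by
    by_cases hp : p = 0
    · simp [hp]
    · simp [hp, DyckWord.nest_insidePart_add_outsidePart]

lemma P_eq_genFun : P = genFun ℚ dyckWeight := by
  ext d
  have himage : {l | IsDyckPath (d 0) l ∧ pyramidWeight l = d 1} =
      boolPath '' {p | dyckWeight p = d} := by
    ext l
    simp only [Set.mem_ofPred_eq, Set.mem_image, isDyckPath_iff_s10, dyckWeight_eq_iff]
    constructor
    · rintro ⟨⟨p, hp, rfl⟩, hw⟩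
      exact ⟨p, ⟨hp, hw⟩, rfl⟩
    · rintro ⟨p, ⟨hp, hw⟩, rfl⟩
      exact ⟨⟨p, hp, rfl⟩, hw⟩
  exact congrArg Nat.cast
    ((congrArg (fun s : Set (List Bool) => Nat.card s) himage).trans
      (Nat.card_image_of_injective boolPath_injective _))

lemma genFun_dyckWeight :
    genFun ℚ dyckWeight =
      genFun ℚ (fun p : DyckWord => dyckWeight p.nest) * genFun ℚ dyckWeight + 1 := by
  rw [← genFun_prod, genFun_eq_add_one ℚ firstReturnEquiv dyckWeight dyckWeight_zero]
  simp only [firstReturnEquiv, Equiv.coe_fn_mk, Sum.elim_inl, dyckWeight_add]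

lemma genFun_dyckWeight_pyramidWord :
    genFun ℚ (fun h => dyckWeight (pyramidWord h)) = (1 - X 0 * X 1)⁻¹ := by
  simp only [dyckWeight_pyramidWord]
  rw [genFun_nsmul (by simp), X, X, monomial_mul_monomial, one_mul]

lemma genFun_dyckWeight_nest :
    genFun ℚ (fun p : DyckWord => dyckWeight p.nest) =
      X 0 * (genFun ℚ dyckWeight - (1 - X 1) * (1 - X 0 * X 1)⁻¹) := by
  have hpyr : genFun ℚ (fun h => dyckWeight (pyramidWord h).nest) =
      X 0 * X 1 * (1 - X 0 * X 1)⁻¹ := by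
    simp only [fun h => dyckWeight_nest_of_mem (Set.mem_range_self (f := pyramidWord) h)]
    rw [genFun_add_left, genFun_dyckWeight_pyramidWord, X, X, monomial_mul_monomial, one_mul]
  have hrest : genFun ℚ (fun p : {p // p ∉ Set.range pyramidWord} => dyckWeight p.1.nest) =
      X 0 * genFun ℚ (fun p : {p // p ∉ Set.range pyramidWord} => dyckWeight p.1) := by
    simp only [fun p : {p // p ∉ Set.range pyramidWord} => dyckWeight_nest_of_notMem p.2]
    exact genFun_add_left ℚ _ _
  rw [genFun_eq_add_of_injective ℚ pyramidWord_injective fun p => dyckWeight p.nest,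
    genFun_eq_add_of_injective ℚ pyramidWord_injective dyckWeight, hpyr, hrest,
    genFun_dyckWeight_pyramidWord]
  ring

end FirstReturn

open MvPowerSeries in
/-- `P = 1 + x·(P - (1-y)/(1-xy))·P`. -/
theorem P_equation :
    P = 1 + (X 0 : MvPowerSeries (Fin 2) ℚ) *
      (P - (1 - X 1) * (1 - X 0 * X 1)⁻¹) * P := by
  rw [P_eq_genFun, ← genFun_dyckWeight_nest, add_comm]
  exact genFun_dyckWeight
end
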